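/- arXiv:1906.07129 — 3 statements merged into one kernel-verified Lean document; each statement's English description precedes it below -/
import Mathlib

section
/- Let λ ∈ ℂ*, α ∈ ℂ. On the ℤ₂-graded space 𝒱 = ℂ[x] ⊕ ℂ[y] (even part ℂ[x], odd part ℂ[y]), the actions L_m f(x) = λ^m (x + mα) f(x+m), L_m g(y) = λ^m (y + m(α + 1/2)) g(y+m), G_r f(x) = λ^{r−1/2} f(y+r), G_r g(y) = λ^{r+1/2} (x + 2rα) g(x+r) (for m ∈ ℤ, r ∈ 1/2 + ℤ) define a module structure over the Neveu-Schwarz algebra. -/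
/-!
Both sides of each relation are `ℂ`-linear combinations of products of a polynomial of degree at
most two with one and the same shift `f(x + c)`, where `c` is the sum of the two indices, since
shifts compose additively. The powers of `λ` also agree, by `λ^(p+q) = λ^p λ^q`. What remains is a
polynomial identity in `x`, `α` and the indices: for example
`(x + mα)(x + m + nα) - (x + nα)(x + n + mα) = (m - n)(x + (m + n)α)` for `[L_m, L_n]` on `ℂ[x]`.
As `ℂ` is infinite, it suffices to compare values at each point `z`.
-/

open Polynomial

/-- `L_m` on the even part `ℂ[x]` of `Ω_NS(λ,α)`: `f ↦ λ^m (x + mα) f(x+m)`. -/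
noncomputable def l0 (l a : ℂ) (m : ℤ) (f : Polynomial ℂ) : Polynomial ℂ :=
  l ^ m • ((X + C ((m : ℂ) * a)) * f.comp (X + C (m : ℂ)))

/-- `L_m` on the odd part `ℂ[y]`: `g ↦ λ^m (y + m(α+1/2)) g(y+m)`. -/
noncomputable def nl1 (l a : ℂ) (m : ℤ) (g : Polynomial ℂ) : Polynomial ℂ :=
  l ^ m • ((X + C ((m : ℂ) * (a + 1/2))) * g.comp (X + C (m : ℂ)))

/-- `G_r` (with `r = k + 1/2`, `k ∈ ℤ`) from the even to the odd part:
`f(x) ↦ λ^{r−1/2} f(y+r)`. -/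
noncomputable def ng01 (l : ℂ) (k : ℤ) (f : Polynomial ℂ) : Polynomial ℂ :=
  l ^ k • f.comp (X + C ((k : ℂ) + 1/2))

/-- `G_r` (with `r = k + 1/2`) from the odd to the even part:
`g(y) ↦ λ^{r+1/2} (x + 2rα) g(x+r)`. -/
noncomputable def ng10 (l a : ℂ) (k : ℤ) (g : Polynomial ℂ) : Polynomial ℂ :=
  l ^ (k + 1) • ((X + C (2 * ((k : ℂ) + 1/2) * a)) * g.comp (X + C ((k : ℂ) + 1/2)))

/-- `L_m` on `Ω_NS(λ,α) = ℂ[x] ⊕ ℂ[y]`, a pair `(f, g)`. -/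
noncomputable def NL (l a : ℂ) (m : ℤ) (v : Polynomial ℂ × Polynomial ℂ) :
    Polynomial ℂ × Polynomial ℂ :=
  (l0 l a m v.1, nl1 l a m v.2)

/-- `G_{k+1/2}` on `Ω_NS(λ,α)`. -/
noncomputable def NG (l a : ℂ) (k : ℤ) (v : Polynomial ℂ × Polynomial ℂ) :
    Polynomial ℂ × Polynomial ℂ :=
  (ng10 l a k v.2, ng01 l k v.1)

/-- the formulas above define a module structure over the Neveu-Schwarz
algebra: `[L_m,L_n]=(m−n)L_{m+n}`, `[L_m,G_r]=(m/2−r)G_{m+r}` and `[G_r,G_s]=2L_{r+s}`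
(an anticommutator), where `r = k + 1/2`, `s = j + 1/2` with `k, j ∈ ℤ`. -/
theorem ns_module_relations (l a : ℂ) (hl : l ≠ 0) (m n k j : ℤ)
    (v : Polynomial ℂ × Polynomial ℂ) :
    NL l a m (NL l a n v) - NL l a n (NL l a m v) = ((m - n : ℤ) : ℂ) • NL l a (m + n) v
    ∧ NL l a m (NG l a k v) - NG l a k (NL l a m v)
        = ((m : ℂ) / 2 - ((k : ℂ) + 1/2)) • NG l a (m + k) v
    ∧ NG l a k (NG l a j v) + NG l a j (NG l a k v) = (2 : ℂ) • NL l a (k + j + 1) v := by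
  obtain ⟨f, g⟩ := v
  refine ⟨Prod.ext ?_ ?_, Prod.ext ?_ ?_, Prod.ext ?_ ?_⟩ <;>
    refine Polynomial.funext fun z => ?_ <;>
    simp only [NL, NG, l0, nl1, ng01, ng10, Prod.fst_sub, Prod.snd_sub, Prod.fst_add,
      Prod.snd_add, Prod.smul_fst, Prod.smul_snd, eval_sub, eval_add, eval_smul, eval_mul,
      eval_comp, eval_X, eval_C, smul_eq_mul, Int.cast_add, Int.cast_sub, Int.cast_one,
      zpow_add₀ hl, zpow_one]
  -- In each case the shifted arguments are first brought to the common form `z + c`.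
  · rw [show z + (m : ℂ) + n = z + (m + n) by ring, show z + (n : ℂ) + m = z + (m + n) by ring]
    ring
  · rw [show z + (m : ℂ) + n = z + (m + n) by ring, show z + (n : ℂ) + m = z + (m + n) by ring]
    ring
  · rw [show z + (m : ℂ) + (k + 1 / 2) = z + (m + k + 1 / 2) by ring,
      show z + ((k : ℂ) + 1 / 2) + m = z + (m + k + 1 / 2) by ring]
    ring
  · rw [show z + (m : ℂ) + (k + 1 / 2) = z + (m + k + 1 / 2) by ring,
      show z + ((k : ℂ) + 1 / 2) + m = z + (m + k + 1 / 2) by ring]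
    ring
  · rw [show z + ((k : ℂ) + 1 / 2) + (j + 1 / 2) = z + (k + j + 1) by ring,
      show z + ((j : ℂ) + 1 / 2) + (k + 1 / 2) = z + (k + j + 1) by ring]
    ring
  · rw [show z + ((k : ℂ) + 1 / 2) + (j + 1 / 2) = z + (k + j + 1) by ring,
      show z + ((j : ℂ) + 1 / 2) + (k + 1 / 2) = z + (k + j + 1) by ring]
    ring
end

section
/- Let M be a module over the Ramond algebra R that is free of rank 1 over U(𝔥) = ℂ[L_0] ⊕ G_0ℂ[L_0] with even basis element 𝟏, where L_0·𝟏 = x²·𝟏 and G_0·𝟏 = x·𝟏 under the identification M = ℂ[x²]𝟏 ⊕ xℂ[x²]𝟏. If the even-part action satisfies L_m f(x²)𝟏 = λ^m(x²+mα)f(x²+m)𝟏, then G_m𝟏 = λ^m x 𝟏 for all m ∈ ℤ. -/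
/-!
Write `P = G_m : M0 → M1` and `p = P 1`. The relations between `G_m`, `L_m` and `G_0` express
`L_m` on the odd part and `G_m : M1 → M0` through `P` and the known operator `L_m` on the even part;
the remaining relation becomes `P ∘ X = (X + m) ∘ P`, so `P f = f(X + m) p`.
Now `G_m² = L_{2m}` applied to `1` reads
`p(t + m) * (2 λ^m (t + mα) - t p(t)) = λ^{2m} (t + 2mα)`.
If `p` had degree `d ≥ 1` the left side would have degree `2d + 1 > 1`; so `p` is a constant `c`,
and the coefficient of `t` gives `(c - λ^m)² = 0`.
-/

open Polynomial

/-- `L_m` on the odd part `xℂ[x²]` (coordinate `t = x²`): `f ↦ λ^m (t + mα + m/2) f(t+m)`. -/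
noncomputable def l1 (l a : ℂ) (m : ℤ) (f : Polynomial ℂ) : Polynomial ℂ :=
  l ^ m • ((X + C ((m : ℂ) * a + (m : ℂ) / 2)) * f.comp (X + C (m : ℂ)))

/-- `G_m` from the even part to the odd part: `f(x²) ↦ λ^m x f(x²+m)`. -/
noncomputable def g01 (l : ℂ) (m : ℤ) (f : Polynomial ℂ) : Polynomial ℂ :=
  l ^ m • f.comp (X + C (m : ℂ))

/-- `G_m` from the odd part to the even part: `x f(x²) ↦ λ^m (x² + 2mα) f(x²+m)`. -/
noncomputable def g10 (l a : ℂ) (m : ℤ) (f : Polynomial ℂ) : Polynomial ℂ :=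
  l ^ m • ((X + C (2 * (m : ℂ) * a)) * f.comp (X + C (m : ℂ)))

/-- `L_m` on `Ω_R(λ,α) = ℂ[x²] ⊕ xℂ[x²]`, a pair `(f, g)` representing `f(x²) + x g(x²)`. -/
noncomputable def RL (l a : ℂ) (m : ℤ) (v : Polynomial ℂ × Polynomial ℂ) :
    Polynomial ℂ × Polynomial ℂ :=
  (l0 l a m v.1, l1 l a m v.2)

/-- `G_m` on `Ω_R(λ,α)`. -/
noncomputable def RG (l a : ℂ) (m : ℤ) (v : Polynomial ℂ × Polynomial ℂ) :
    Polynomial ℂ × Polynomial ℂ :=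
  (g10 l a m v.2, g01 l m v.1)

/-- A representation of the Ramond algebra `R` on a `ℤ₂`-graded complex vector space
`M = M0 ⊕ M1`: `LE`/`LO` are the actions of `L_m` on the even/odd part, `GEO`/`GOE` the
actions of `G_m` from even to odd and from odd to even, and the axioms are the relations
`[L_m,L_n]=(m−n)L_{m+n}`, `[L_m,G_n]=(m/2−n)G_{m+n}`, `[G_m,G_n]=2L_{m+n}`
(an anticommutator). -/
structure RRep (M0 M1 : Type*) [AddCommGroup M0] [Module ℂ M0]
    [AddCommGroup M1] [Module ℂ M1] where
  LE : ℤ → M0 →ₗ[ℂ] M0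
  LO : ℤ → M1 →ₗ[ℂ] M1
  GEO : ℤ → M0 →ₗ[ℂ] M1
  GOE : ℤ → M1 →ₗ[ℂ] M0
  ll_e : ∀ (m n : ℤ) (v : M0),
    LE m (LE n v) - LE n (LE m v) = ((m - n : ℤ) : ℂ) • LE (m + n) v
  ll_o : ∀ (m n : ℤ) (w : M1),
    LO m (LO n w) - LO n (LO m w) = ((m - n : ℤ) : ℂ) • LO (m + n) w
  lg_e : ∀ (m n : ℤ) (v : M0),
    LO m (GEO n v) - GEO n (LE m v) = ((m : ℂ) / 2 - (n : ℂ)) • GEO (m + n) v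
  lg_o : ∀ (m n : ℤ) (w : M1),
    LE m (GOE n w) - GOE n (LO m w) = ((m : ℂ) / 2 - (n : ℂ)) • GOE (m + n) w
  gg_e : ∀ (m n : ℤ) (v : M0),
    GOE m (GEO n v) + GOE n (GEO m v) = (2 : ℂ) • LE (m + n) v
  gg_o : ∀ (m n : ℤ) (w : M1),
    GEO m (GOE n w) + GEO n (GOE m w) = (2 : ℂ) • LO (m + n) w

/-- `G_m` from odd to even is `2 L_m - X G_m`, which is the relation `[G_m, G_0] = 2 L_m`. -/
lemma GOE_eq (ρ : RRep (Polynomial ℂ) (Polynomial ℂ))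
    (hG0e : ∀ f : Polynomial ℂ, ρ.GEO 0 f = f)
    (hG0o : ∀ g : Polynomial ℂ, ρ.GOE 0 g = X * g) (m : ℤ) (f : Polynomial ℂ) :
    ρ.GOE m f = (2 : ℂ) • ρ.LE m f - X * ρ.GEO m f := by
  have h := ρ.gg_e m 0 f
  rw [hG0e, hG0o, add_zero] at h
  exact eq_sub_of_add_eq h

lemma GEO_X_mul (ρ : RRep (Polynomial ℂ) (Polynomial ℂ))
    (hG0e : ∀ f : Polynomial ℂ, ρ.GEO 0 f = f)
    (hG0o : ∀ g : Polynomial ℂ, ρ.GOE 0 g = X * g) (m : ℤ) (f : Polynomial ℂ) :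
    ρ.GEO m (X * f) = (X + C (m : ℂ)) * ρ.GEO m f := by
  have h1 := ρ.gg_o m 0 f
  have h2 := ρ.lg_e m 0 f
  rw [hG0o, hG0e, add_zero, GOE_eq ρ hG0e hG0o] at h1
  rw [hG0e, hG0e, add_zero] at h2
  rw [sub_eq_iff_eq_add] at h2
  rw [h2] at h1
  have h3 : (2 : ℂ) • (((m : ℂ) / 2 - ((0 : ℤ) : ℂ)) • ρ.GEO m f) = C (m : ℂ) * ρ.GEO m f := by
    rw [smul_smul, ← smul_eq_C_mul]
    congr 1
    push_cast
    ring
  rw [smul_add, h3] at h1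
  linear_combination h1

lemma GEO_eq_comp_mul (ρ : RRep (Polynomial ℂ) (Polynomial ℂ))
    (hG0e : ∀ f : Polynomial ℂ, ρ.GEO 0 f = f)
    (hG0o : ∀ g : Polynomial ℂ, ρ.GOE 0 g = X * g) (m : ℤ) (f : Polynomial ℂ) :
    ρ.GEO m f = f.comp (X + C (m : ℂ)) * ρ.GEO m 1 := by
  induction f using Polynomial.induction_on with
  | C a =>
    rw [C_comp, ← smul_eq_C_mul, ← map_smul, smul_eq_C_mul, mul_one]
  | add p q hp hq => rw [map_add, hp, hq, add_comp, add_mul]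
  | monomial n a h =>
    have e : C a * X ^ (n + 1) = X * (C a * X ^ n) := by ring
    rw [e, GEO_X_mul ρ hG0e hG0o, h, mul_comp X, X_comp, mul_assoc]

/-- The polynomial equation forced by `G_m² = L_{2m}`, with `b` in the role of `λ^m`. -/
lemma eq_C_of_quadratic (b s u v : ℂ) (p : Polynomial ℂ)
    (h : p.comp (X + C s) * (C (2 * b) * (X + C u) - X * p) = C (b ^ 2) * (X + C v)) :
    p = C b := by
  have hd : p.natDegree = 0 := by
    by_contra hne
    have hp : p ≠ 0 := fun h0 => hne (by simp [h0])
    have hXp : (X * p).natDegree = p.natDegree + 1 := natDegree_X_mul hp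
    have h1 : (C (2 * b) * (X + C u)).natDegree ≤ 1 :=
      (natDegree_C_mul_le _ _).trans (natDegree_X_add_C u).le
    have h2 : (C (2 * b) * (X + C u) - X * p).natDegree = p.natDegree + 1 := by
      rw [natDegree_sub_eq_right_of_natDegree_lt (by omega), hXp]
    have h3 : (p.comp (X + C s)).natDegree = p.natDegree := by
      rw [natDegree_comp, natDegree_X_add_C, mul_one]
    have h4 : (C (b ^ 2) * (X + C v)).natDegree ≤ 1 :=
      (natDegree_C_mul_le _ _).trans (natDegree_X_add_C v).le
    rw [← h, natDegree_mul (ne_zero_of_natDegree_gt (n := 0) (by omega))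
      (ne_zero_of_natDegree_gt (n := 0) (by omega)), h2, h3] at h4
    omega
  obtain ⟨c, rfl⟩ := natDegree_eq_zero.mp hd
  have h1 := congrArg (eval 1) h
  have h0 := congrArg (eval 0) h
  simp only [C_comp, eval_mul, eval_sub, eval_add, eval_C, eval_X] at h0 h1
  have h2 : (c - b) ^ 2 = 0 := by linear_combination h0 - h1
  rw [sub_eq_zero.mp (pow_eq_zero_iff two_ne_zero |>.mp h2)]

/-- let `M` be an `R`-module free of rank 1 over `U(𝔥)` with even basis `𝟏`,
identified with `ℂ[x²]𝟏 ⊕ xℂ[x²]𝟏` (coordinate `t = x²`), so that `G_0` sends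
`f(x²)𝟏 ↦ x f(x²)𝟏` (i.e. `GEO 0 = id`) and `x g(x²)𝟏 ↦ x² g(x²)𝟏` (i.e. `GOE 0 = X·`).
If `L_m f(x²)𝟏 = λ^m (x²+mα) f(x²+m)𝟏`, then `G_m 𝟏 = λ^m x 𝟏` for all `m ∈ ℤ`. -/
theorem ramond_Gm_on_generator (l a : ℂ) (hl : l ≠ 0)
    (ρ : RRep (Polynomial ℂ) (Polynomial ℂ))
    (hLE : ∀ (m : ℤ) (f : Polynomial ℂ), ρ.LE m f = l0 l a m f)
    (hG0e : ∀ f : Polynomial ℂ, ρ.GEO 0 f = f)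
    (hG0o : ∀ g : Polynomial ℂ, ρ.GOE 0 g = X * g) :
    ∀ m : ℤ, ρ.GEO m 1 = l ^ m • (1 : Polynomial ℂ) := by
  intro m
  have h := ρ.gg_e m m 1
  rw [← two_smul ℂ] at h
  have h' := smul_right_injective (Polynomial ℂ) (two_ne_zero (α := ℂ)) h
  rw [GOE_eq ρ hG0e hG0o, GEO_eq_comp_mul ρ hG0e hG0o m (ρ.GEO m 1), hLE, hLE] at h'
  simp only [l0, zpow_add₀ hl, smul_eq_C_mul, one_comp] at h'
  rw [smul_eq_C_mul, mul_one]
  apply eq_C_of_quadratic (l ^ m) m (m * a) (((m + m : ℤ) : ℂ) * a)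
  simp only [pow_two, C_mul] at h' ⊢
  linear_combination h'
end

section
/- Let M be a module over the Ramond algebra R whose restriction to U(𝔥) (𝔥 = ℂL_0 ⊕ ℂG_0) is free of rank 1. Then, up to parity change, M is isomorphic to Ω_R(λ, α) for some λ ∈ ℂ* and α ∈ ℂ. -/
/-! Let `v` be the generator. The maps `f ↦ f(L_0)v` and `f ↦ G_0 f(L_0)v` identify both graded
components with `ℂ[t]`, and then `L_0` is multiplication by `t`, `G_0` is the identity from even to
odd and multiplication by `t` from odd to even. Since `[L_0, G_m] = -m G_m`, each `G_m` is
semilinear for the shift `t ↦ t + m`, so `G_m f = A_m(t) f(t+m)` on the even part and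
`G_m f = B_m(t) f(t+m)` on the odd part, and `2 L_m = [G_m, G_0]` shows that the sequences
`A, B` determine the module. The relations become functional equations (`RamondRel`).

For `m ≠ 0`, the relation `[L_{2m}, G_{-m}] = 2m G_m` with `L_{2m} = G_m²` says, after cancelling
`A_m`, that `h(t) = B_m(t-m) A_{-m}(t)` satisfies `h(t+2m) - h(t) = 2m`, so `h = t + κ`
(`RamondRel.key`). Hence all `A_m, B_m` have degree at most one, and `[L_m, G_{-m}] = (3m/2) G_0`
forces `A_m` to be a nonzero constant (`RamondRel.A_const`) and `B_m = A_m (t + β_m)`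
(`RamondRel.form`).
The remaining relations say that `m ↦ A_m` is multiplicative and `m ↦ β_m` is additive
(`RamondRel.solve`). The case of an odd generator follows by exchanging the parities. -/

open Polynomial

/-! ### Polynomials and shifts -/

/-- A polynomial whose increment along a nonzero step `c` is the constant `c` is `t + κ`. -/
lemma poly_of_shift (h : ℂ[X]) (c : ℂ) (hc : c ≠ 0)
    (H : ∀ t, h.eval (t + c) - h.eval t = c) : ∃ κ : ℂ, h = X + C κ := by
  refine ⟨h.eval 0, Polynomial.eq_of_infinite_eval_eq _ _ ?_⟩
  have key : ∀ k : ℕ, h.eval ((k : ℂ) * c) = (k : ℂ) * c + h.eval 0 := by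
    intro k
    induction k with
    | zero => simp
    | succ k ih =>
      have := H ((k : ℂ) * c)
      have e : ((k + 1 : ℕ) : ℂ) * c = (k : ℂ) * c + c := by push_cast; ring
      rw [e]
      linear_combination this + ih
  refine Set.infinite_of_injective_forall_mem (f := fun k : ℕ => (k : ℂ) * c) ?_ ?_
  · intro i j hij
    exact_mod_cast mul_right_cancel₀ hc hij
  · intro k
    simp [key k]

lemma deg_of_mul (b c : ℂ[X]) (m κ : ℂ) (H : ∀ t, b.eval (t - m) * c.eval t = t + κ) :
    b.natDegree ≤ 1 ∧ c.natDegree ≤ 1 := by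
  have e : b.comp (X - C m) * c = X + C κ := by
    apply Polynomial.funext
    intro t
    simpa using H t
  have hne : b.comp (X - C m) * c ≠ 0 := by
    rw [e]
    exact Polynomial.X_add_C_ne_zero κ
  have hd := congrArg Polynomial.natDegree e
  rw [Polynomial.natDegree_mul (left_ne_zero_of_mul hne) (right_ne_zero_of_mul hne),
    Polynomial.natDegree_comp, Polynomial.natDegree_X_add_C, Polynomial.natDegree_X_sub_C] at hd
  omega

/-- An operator semilinear for the shift `t ↦ t + c` is determined by its value at `1`. -/
lemma semilinear_apply (T : ℂ[X] →ₗ[ℂ] ℂ[X]) (c : ℂ)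
    (H : ∀ f, T (X * f) = (X + C c) * T f) (f : ℂ[X]) :
    T f = T 1 * f.comp (X + C c) := by
  induction f using Polynomial.induction_on' with
  | add p q hp hq => rw [map_add, hp, hq, Polynomial.add_comp, mul_add]
  | monomial n a =>
    have hn : ∀ n : ℕ, T (X ^ n) = T 1 * (X + C c) ^ n := by
      intro n
      induction n with
      | zero => simp
      | succ n ih => rw [pow_succ', H, ih]; ring
    rw [← Polynomial.C_mul_X_pow_eq_monomial, ← Polynomial.smul_eq_C_mul, map_smul, hn]
    simp [Polynomial.smul_eq_C_mul]
    ring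

/-! ### The functional equations -/

/-- The Ramond relations for operators `G_m f = A_m(t) f(t+m)` (even to odd) and
`G_m f = B_m(t) f(t+m)` (odd to even), with `L_m` eliminated through `2 L_m = [G_m, G_0]`. -/
structure RamondRel (A B : ℤ → ℂ[X]) : Prop where
  A0 : A 0 = 1
  B0 : B 0 = X
  gge : ∀ (m n : ℤ) (t : ℂ), (B m).eval t * (A n).eval (t + m) + (B n).eval t * (A m).eval (t + n)
    = (B (m + n)).eval t + t * (A (m + n)).eval t
  ggo : ∀ (m n : ℤ) (t : ℂ), (A m).eval t * (B n).eval (t + m) + (A n).eval t * (B m).eval (t + n)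
    = (B (m + n)).eval t + (t + m + n) * (A (m + n)).eval t
  lge : ∀ (m n : ℤ) (t : ℂ),
    ((t + m) * (A m).eval t + (B m).eval t) * (A n).eval (t + m)
      - (A n).eval t * ((B m).eval (t + n) + (t + n) * (A m).eval (t + n))
    = (m - 2 * n) * (A (m + n)).eval t

namespace RamondRel

variable {A B : ℤ → ℂ[X]}

lemma A_ne (h : RamondRel A B) {m : ℤ} (hm : m ≠ 0) : A m ≠ 0 := by
  intro h0
  have h1 := h.gge m (-m) (-m)
  have h2 := h.ggo m (-m) 0
  simp [h0, h.A0, h.B0, -mul_eq_zero] at h1 h2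
  have : (m : ℂ) = 0 := by linear_combination (1 / 2) * h1 - (1 / 2) * h2
  exact hm (by exact_mod_cast this)

/-- The relation `[L_{2m}, G_{-m}] = 2m G_m` makes `B_m(t-m) A_{-m}(t)` monic of degree one. -/
lemma key (h : RamondRel A B) {m : ℤ} (hm : m ≠ 0) :
    ∃ κ : ℂ, ∀ t : ℂ, (B m).eval (t - m) * (A (-m)).eval t = t + κ := by
  have hmC : (m : ℂ) ≠ 0 := by exact_mod_cast hm
  set p : ℂ[X] := (B m).comp (X - C (m : ℂ)) * A (-m) with hp
  have main : A m * (p.comp (X + C (2 * m : ℂ)) - p - C (2 * m : ℂ)) = 0 := by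
    apply Polynomial.funext
    intro t
    have e1 := h.ggo m m t
    have e2 := h.gge m m (t - m)
    have e3 := h.lge (m + m) (-m) t
    have i1 : m + m + -m = m := by ring
    rw [i1] at e3
    push_cast at e3
    have j1 : t + ((m : ℂ) + m) = t + 2 * m := by ring
    have j2 : t + -(m : ℂ) = t - m := by ring
    have j3 : t + 2 * (m : ℂ) - m = t + m := by ring
    have j4 : t - (m : ℂ) + m = t := by ring
    rw [j1, j2] at e3
    rw [j4] at e2
    simp only [hp, Polynomial.eval_mul, Polynomial.eval_sub, Polynomial.eval_comp,
      Polynomial.eval_add, Polynomial.eval_X, Polynomial.eval_C, Polynomial.eval_zero, j3]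
    linear_combination (1 / 2) * e3 + (1 / 2) * (A (-m)).eval (t + 2 * m) * e1
      - (1 / 2) * (A (-m)).eval t * e2
  have main2 := (mul_eq_zero.mp main).resolve_left (h.A_ne hm)
  obtain ⟨κ, hκ⟩ := poly_of_shift p (2 * m) (by simpa using hmC) (by
    intro t
    have := congrArg (Polynomial.eval t) main2
    simp only [Polynomial.eval_sub, Polynomial.eval_comp,
      Polynomial.eval_add, Polynomial.eval_X, Polynomial.eval_C, Polynomial.eval_zero] at this
    linear_combination this)
  refine ⟨κ, fun t => ?_⟩
  have := congrArg (Polynomial.eval t) hκ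
  simpa [hp] using this

/-- All of `A_m, B_m, A_{-m}` have degree at most one by `key`; if `A_m` were not constant, the top coefficient of
`[L_m, G_{-m}] = (3m/2) G_0` would not vanish. -/
lemma A_const (h : RamondRel A B) {m : ℤ} (hm : m ≠ 0) : ∃ l : ℂ, l ≠ 0 ∧ A m = C l := by
  have hmC : (m : ℂ) ≠ 0 := by exact_mod_cast hm
  obtain ⟨κ, hκ⟩ := h.key hm
  obtain ⟨κ', hκ'⟩ := h.key (neg_ne_zero.mpr hm)
  rw [neg_neg] at hκ'
  obtain ⟨hb, hc⟩ := deg_of_mul _ _ _ _ hκ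
  obtain ⟨-, ha⟩ := deg_of_mul _ _ _ _ hκ'
  obtain ⟨a1, a0, ea⟩ := Polynomial.exists_eq_X_add_C_of_natDegree_le_one ha
  obtain ⟨b1, b0, eb⟩ := Polynomial.exists_eq_X_add_C_of_natDegree_le_one hb
  obtain ⟨c1, c0, ec⟩ := Polynomial.exists_eq_X_add_C_of_natDegree_le_one hc
  have hane := h.A_ne hm
  have hcne := h.A_ne (neg_ne_zero.mpr hm)
  have hbc : b1 * c1 = 0 := by
    have h0 := hκ 0
    have h1 := hκ 1
    have h2 := hκ (-1)
    simp [eb, ec] at h0 h1 h2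
    linear_combination (1 / 2) * h1 + (1 / 2) * h2 - h0
  have E : ∀ t : ℂ, _ := fun t => h.lge m (-m) t
  have h0 := E 0
  have h1 := E 1
  have h2 := E (-1)
  simp [ea, eb, ec, h.A0] at h0 h1 h2
  -- The second difference at `0` extracts the coefficient of `t ^ 2`.
  have hac : a1 * c1 = 0 := by
    have : (m : ℂ) * (a1 * c1) = 0 := by
      linear_combination (1 / 8) * (h1 + h2 - 2 * h0)
    exact (mul_eq_zero.mp this).resolve_left hmC
  have ha1 : a1 = 0 := by
    rcases mul_eq_zero.mp hac with h' | h'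
    · exact h'
    · subst h'
      have hc0 : c0 ≠ 0 := by
        rintro rfl
        exact hcne (by simp [ec])
      have : (m * c0 : ℂ) * a1 = 0 := by
        linear_combination (1 / 3) * (h1 - h0)
      exact (mul_eq_zero.mp this).resolve_left (mul_ne_zero hmC hc0)
  subst ha1
  refine ⟨a0, ?_, by simp [ea]⟩
  rintro rfl
  exact hane (by simp [ea])

lemma form (h : RamondRel A B) (m : ℤ) :
    ∃ l β : ℂ, l ≠ 0 ∧ A m = C l ∧ B m = C l * (X + C β) := by
  rcases eq_or_ne m 0 with rfl | hm
  · exact ⟨1, 0, one_ne_zero, by simp [h.A0], by simp [h.B0]⟩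
  have hmC : (m : ℂ) ≠ 0 := by exact_mod_cast hm
  obtain ⟨κ, hκ⟩ := h.key hm
  obtain ⟨l, hl, ea⟩ := h.A_const hm
  obtain ⟨c, hc, ec⟩ := h.A_const (neg_ne_zero.mpr hm)
  have hb : ∀ t, (B m).eval t * c = t + m + κ := by
    intro t
    have := hκ (t + m)
    simpa [ec] using this
  have hlc : l * c = 1 := by
    have e := h.lge m (-m) 0
    have f0 := hb 0
    have f1 := hb (-m)
    simp [ea, ec, h.A0] at e f0 f1
    have : (m : ℂ) * (l * c - 1) = 0 := by
      linear_combination (1 / 2) * (e - f0 + f1)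
    linear_combination (mul_eq_zero.mp this).resolve_left hmC
  refine ⟨l, m + κ, hl, ea, ?_⟩
  apply Polynomial.funext
  intro t
  simp
  linear_combination l * hb t - (B m).eval t * hlc

/-- Every solution of the functional equations comes from some `Ω_R(λ,α)`. -/
lemma solve (h : RamondRel A B) : ∃ l : ℂ, l ≠ 0 ∧ ∃ a : ℂ, ∀ m : ℤ,
    A m = C (l ^ m) ∧ B m = C (l ^ m) * (X + C (2 * (m : ℂ) * a)) := by
  choose l β hl hA hB using h.form
  have mul' : ∀ m n : ℤ, m ≠ 2 * n → l (m + n) = l m * l n := by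
    intro m n hmn
    have e := h.lge m n 0
    simp [hA, hB] at e
    have hne : ((m : ℂ) - 2 * n) ≠ 0 := by
      intro h0
      apply hmn
      have : (m : ℂ) = ((2 * n : ℤ) : ℂ) := by push_cast; linear_combination h0
      exact_mod_cast this
    apply mul_left_cancel₀ hne
    linear_combination -e
  have hl0 : l 0 = 1 := by
    have := hA 0
    rw [h.A0, ← Polynomial.C_1] at this
    exact (Polynomial.C_injective this).symm
  -- `m = 2n` and `n = 2m` hold together only at `m = n = 0`, so one of the two orders works.
  have mul : ∀ m n : ℤ, l (m + n) = l m * l n := by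
    intro m n
    by_cases h1 : m = 2 * n
    · by_cases h2 : n = 2 * m
      · obtain rfl : m = 0 := by omega
        obtain rfl : n = 0 := by omega
        simp [hl0]
      · rw [add_comm, mul' n m h2, mul_comm]
    · exact mul' m n h1
  have add : ∀ m n : ℤ, β (m + n) = β m + β n := by
    intro m n
    have e := h.gge m n 0
    simp [hA, hB, mul] at e
    apply mul_left_cancel₀ (mul_ne_zero (hl m) (hl n))
    linear_combination -e
  let L : ℤ →+ Additive ℂˣ := AddMonoidHom.mk' (fun m => Additive.ofMul (Units.mk0 (l m) (hl m)))
    (by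
      intro m n
      apply Additive.toMul.injective
      ext
      simp [mul])
  let T : ℤ →+ ℂ := AddMonoidHom.mk' β add
  have hT : ∀ m : ℤ, β m = m * β 1 := by
    intro m
    have := map_zsmul T m 1
    simpa [T] using this
  have hL : ∀ m : ℤ, l m = l 1 ^ m := by
    intro m
    have := map_zsmul L m 1
    have := congrArg (fun u => ((Additive.toMul u : ℂˣ) : ℂ)) this
    simpa [L] using this
  refine ⟨l 1, hl 1, β 1 / 2, fun m => ⟨?_, ?_⟩⟩
  · rw [hA, hL]
  · rw [hB, hL, hT]
    congr 3
    ring_nf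

end RamondRel

/-! ### Representations -/

/-- Transport of a representation along linear equivalences of the graded components. -/
noncomputable def RRep.transport {M0 M1 N0 N1 : Type*} [AddCommGroup M0] [Module ℂ M0]
    [AddCommGroup M1] [Module ℂ M1] [AddCommGroup N0] [Module ℂ N0]
    [AddCommGroup N1] [Module ℂ N1] (ρ : RRep M0 M1) (e0 : M0 ≃ₗ[ℂ] N0) (e1 : M1 ≃ₗ[ℂ] N1) :
    RRep N0 N1 where
  LE m := e0.toLinearMap ∘ₗ ρ.LE m ∘ₗ e0.symm.toLinearMap
  LO m := e1.toLinearMap ∘ₗ ρ.LO m ∘ₗ e1.symm.toLinearMap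
  GEO m := e1.toLinearMap ∘ₗ ρ.GEO m ∘ₗ e0.symm.toLinearMap
  GOE m := e0.toLinearMap ∘ₗ ρ.GOE m ∘ₗ e1.symm.toLinearMap
  ll_e m n v := by
    simpa only [map_sub, map_smul, LinearMap.comp_apply, LinearEquiv.coe_coe,
      LinearEquiv.symm_apply_apply] using congrArg e0 (ρ.ll_e m n (e0.symm v))
  ll_o m n v := by
    simpa only [map_sub, map_smul, LinearMap.comp_apply, LinearEquiv.coe_coe,
      LinearEquiv.symm_apply_apply] using congrArg e1 (ρ.ll_o m n (e1.symm v))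
  lg_e m n v := by
    simpa only [map_sub, map_smul, LinearMap.comp_apply, LinearEquiv.coe_coe,
      LinearEquiv.symm_apply_apply] using congrArg e1 (ρ.lg_e m n (e0.symm v))
  lg_o m n v := by
    simpa only [map_sub, map_smul, LinearMap.comp_apply, LinearEquiv.coe_coe,
      LinearEquiv.symm_apply_apply] using congrArg e0 (ρ.lg_o m n (e1.symm v))
  gg_e m n v := by
    simpa only [map_add, map_smul, LinearMap.comp_apply, LinearEquiv.coe_coe,
      LinearEquiv.symm_apply_apply] using congrArg e0 (ρ.gg_e m n (e0.symm v))
  gg_o m n v := by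
    simpa only [map_add, map_smul, LinearMap.comp_apply, LinearEquiv.coe_coe,
      LinearEquiv.symm_apply_apply] using congrArg e1 (ρ.gg_o m n (e1.symm v))

/-- The parity change of a representation. -/
def RRep.swap {M0 M1 : Type*} [AddCommGroup M0] [Module ℂ M0]
    [AddCommGroup M1] [Module ℂ M1] (ρ : RRep M0 M1) : RRep M1 M0 where
  LE := ρ.LO
  LO := ρ.LE
  GEO := ρ.GOE
  GOE := ρ.GEO
  ll_e := ρ.ll_o
  ll_o := ρ.ll_e
  lg_e := ρ.lg_o
  lg_o := ρ.lg_e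
  gg_e := ρ.gg_o
  gg_o := ρ.gg_e

/-- Classification on the standard space `ℂ[t] ⊕ ℂ[t]` with `L_0` and `G_0` normalized. -/
lemma RRep.poly_classification (σ : RRep ℂ[X] ℂ[X]) (hL : ∀ f, σ.LE 0 f = X * f)
    (hG : ∀ f, σ.GEO 0 f = f) :
    ∃ l : ℂ, l ≠ 0 ∧ ∃ a : ℂ, ∀ (m : ℤ) (f g : ℂ[X]),
      σ.LE m f = l0 l a m f ∧ σ.LO m g = l1 l a m g
        ∧ σ.GEO m f = g01 l m f ∧ σ.GOE m g = g10 l a m g := by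
  have hGo : ∀ f, σ.GOE 0 f = X * f := by
    intro f
    have := σ.gg_e 0 0 f
    rw [hG, ← two_smul ℂ, add_zero, hL] at this
    exact smul_right_injective _ two_ne_zero this
  have hLo : ∀ f, σ.LO 0 f = X * f := by
    intro f
    have := σ.lg_e 0 0 f
    rw [hG, hG, hL] at this
    simpa [sub_eq_zero] using this
  have hA : ∀ (m : ℤ) f, σ.GEO m f = σ.GEO m 1 * f.comp (X + C (m : ℂ)) := by
    intro m
    apply semilinear_apply
    intro f
    have := σ.lg_e 0 m f
    rw [hL, hLo, zero_add, Polynomial.smul_eq_C_mul] at this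
    simp only [Int.cast_zero, zero_div, zero_sub, Polynomial.C_neg] at this
    linear_combination -this
  have hB : ∀ (m : ℤ) f, σ.GOE m f = σ.GOE m 1 * f.comp (X + C (m : ℂ)) := by
    intro m
    apply semilinear_apply
    intro f
    have := σ.lg_o 0 m f
    rw [hL, hLo, zero_add, Polynomial.smul_eq_C_mul] at this
    simp only [Int.cast_zero, zero_div, zero_sub, Polynomial.C_neg] at this
    linear_combination -this
  set A : ℤ → ℂ[X] := fun m => σ.GEO m 1 with hAdef
  set B : ℤ → ℂ[X] := fun m => σ.GOE m 1 with hBdef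
  replace hA : ∀ (m : ℤ) f, σ.GEO m f = A m * f.comp (X + C (m : ℂ)) := hA
  replace hB : ∀ (m : ℤ) f, σ.GOE m f = B m * f.comp (X + C (m : ℂ)) := hB
  have two : (2 : ℂ[X]) = C 2 := rfl
  have hLE : ∀ (m : ℤ) f, σ.LE m f = C (1 / 2) * ((B m + X * A m) * f.comp (X + C (m : ℂ))) := by
    intro m f
    have := σ.gg_e m 0 f
    rw [hG, hGo, add_zero, hA, hB, Polynomial.smul_eq_C_mul] at this
    have e : (C (1 / 2) : ℂ[X]) * C 2 = 1 := by rw [← Polynomial.C_mul]; norm_num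
    linear_combination (-C (1 / 2)) * this - σ.LE m f * e
  have hLO : ∀ (m : ℤ) f, σ.LO m f
      = C (1 / 2) * ((B m + (X + C (m : ℂ)) * A m) * f.comp (X + C (m : ℂ))) := by
    intro m f
    have := σ.gg_o m 0 f
    rw [hG, hGo, add_zero, hA, hB, Polynomial.smul_eq_C_mul, Polynomial.mul_comp,
      Polynomial.X_comp] at this
    have e : (C (1 / 2) : ℂ[X]) * C 2 = 1 := by rw [← Polynomial.C_mul]; norm_num
    linear_combination (-C (1 / 2)) * this - σ.LO m f * e
  have hrel : RamondRel A B := by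
    refine ⟨hG 1, by simpa using hGo 1, ?_, ?_, ?_⟩
    · intro m n t
      have := congrArg (Polynomial.eval t) (σ.gg_e m n 1)
      simp [hA, hB, hLE] at this
      linear_combination this
    · intro m n t
      have := congrArg (Polynomial.eval t) (σ.gg_o m n 1)
      simp [hA, hB, hLO] at this
      linear_combination this
    · intro m n t
      have := congrArg (Polynomial.eval t) (σ.lg_e m n 1)
      simp [hA, hLO, hLE] at this
      linear_combination 2 * this
  obtain ⟨l, hl, a, H⟩ := hrel.solve
  refine ⟨l, hl, a, fun m f g => ⟨?_, ?_, ?_, ?_⟩⟩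
  · rw [hLE, (H m).1, (H m).2, l0]
    apply Polynomial.funext
    intro t
    simp
    ring
  · rw [hLO, (H m).1, (H m).2, l1]
    apply Polynomial.funext
    intro t
    simp
    ring
  · rw [hA, (H m).1, g01, Polynomial.smul_eq_C_mul]
  · rw [hB, (H m).2, g10, Polynomial.smul_eq_C_mul, mul_assoc]

lemma RRep.even_classification {M0 M1 : Type*} [AddCommGroup M0] [Module ℂ M0]
    [AddCommGroup M1] [Module ℂ M1] (ρ : RRep M0 M1) (v : M0)
    (h0 : Function.Bijective (fun f : ℂ[X] => Polynomial.aeval (ρ.LE 0) f v))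
    (h1 : Function.Bijective (fun f : ℂ[X] => ρ.GEO 0 (Polynomial.aeval (ρ.LE 0) f v))) :
    ∃ (l : ℂ), l ≠ 0 ∧ ∃ (a : ℂ) (e0 : M0 ≃ₗ[ℂ] ℂ[X]) (e1 : M1 ≃ₗ[ℂ] ℂ[X]),
      ∀ (m : ℤ) (v : M0) (w : M1),
          e0 (ρ.LE m v) = l0 l a m (e0 v) ∧ e1 (ρ.LO m w) = l1 l a m (e1 w)
          ∧ e1 (ρ.GEO m v) = g01 l m (e0 v) ∧ e0 (ρ.GOE m w) = g10 l a m (e1 w) := by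
  let φ : ℂ[X] →ₗ[ℂ] M0 := LinearMap.applyₗ v ∘ₗ (Polynomial.aeval (ρ.LE 0)).toLinearMap
  let E0 : ℂ[X] ≃ₗ[ℂ] M0 := LinearEquiv.ofBijective φ h0
  let E1 : ℂ[X] ≃ₗ[ℂ] M1 := LinearEquiv.ofBijective (ρ.GEO 0 ∘ₗ φ) h1
  have hE0 : ∀ f, E0 f = Polynomial.aeval (ρ.LE 0) f v := fun _ => rfl
  have hE1 : ∀ f, E1 f = ρ.GEO 0 (E0 f) := fun _ => rfl
  obtain ⟨l, hl, a, H⟩ := (ρ.transport E0.symm E1.symm).poly_classification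
    (by
      intro f
      change E0.symm (ρ.LE 0 (E0 f)) = X * f
      rw [LinearEquiv.symm_apply_eq, hE0, hE0, map_mul, Polynomial.aeval_X, Module.End.mul_apply])
    (by
      intro f
      change E1.symm (ρ.GEO 0 (E0 f)) = f
      rw [LinearEquiv.symm_apply_eq, hE1])
  refine ⟨l, hl, a, E0.symm, E1.symm, fun m v w => ?_⟩
  simpa [RRep.transport] using H m (E0.symm v) (E1.symm w)

/-- if `M` is an `R`-module whose restriction to
`U(𝔥) = ℂ[L_0] ⊕ G_0 ℂ[L_0]` is free of rank 1 (with a homogeneous generator `v`, so that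
`f ↦ f(L_0)v` and `f ↦ G_0 f(L_0)v` are bijections onto the two graded components),
then up to parity change `M ≅ Ω_R(λ,α)` for some `λ ∈ ℂ*`, `α ∈ ℂ`. -/
theorem ramond_free_rank_one_classification (M0 M1 : Type*)
    [AddCommGroup M0] [Module ℂ M0] [AddCommGroup M1] [Module ℂ M1]
    (ρ : RRep M0 M1)
    (hfree :
      (∃ v : M0,
        Function.Bijective (fun f : Polynomial ℂ => Polynomial.aeval (ρ.LE 0) f v)
        ∧ Function.Bijective
            (fun f : Polynomial ℂ => ρ.GEO 0 (Polynomial.aeval (ρ.LE 0) f v)))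
      ∨ (∃ w : M1,
        Function.Bijective (fun f : Polynomial ℂ => Polynomial.aeval (ρ.LO 0) f w)
        ∧ Function.Bijective
            (fun f : Polynomial ℂ => ρ.GOE 0 (Polynomial.aeval (ρ.LO 0) f w)))) :
    ∃ (l : ℂ), l ≠ 0 ∧ ∃ (a : ℂ) (e0 : M0 ≃ₗ[ℂ] Polynomial ℂ) (e1 : M1 ≃ₗ[ℂ] Polynomial ℂ),
      (∀ (m : ℤ) (v : M0) (w : M1),
          e0 (ρ.LE m v) = l0 l a m (e0 v) ∧ e1 (ρ.LO m w) = l1 l a m (e1 w)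
          ∧ e1 (ρ.GEO m v) = g01 l m (e0 v) ∧ e0 (ρ.GOE m w) = g10 l a m (e1 w))
      ∨ (∀ (m : ℤ) (v : M0) (w : M1),
          e0 (ρ.LE m v) = l1 l a m (e0 v) ∧ e1 (ρ.LO m w) = l0 l a m (e1 w)
          ∧ e1 (ρ.GEO m v) = g10 l a m (e0 v) ∧ e0 (ρ.GOE m w) = g01 l m (e1 w)) := by
  rcases hfree with ⟨v, h0, h1⟩ | ⟨w, h0, h1⟩
  · obtain ⟨l, hl, a, e0, e1, H⟩ := ρ.even_classification v h0 h1
    exact ⟨l, hl, a, e0, e1, Or.inl H⟩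
  · obtain ⟨l, hl, a, e1, e0, H⟩ := ρ.swap.even_classification w h0 h1
    refine ⟨l, hl, a, e0, e1, Or.inr fun m v w => ?_⟩
    obtain ⟨p, q, r, s⟩ := H m w v
    exact ⟨q, p, s, r⟩
end
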